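/- There exist positive constants C and σ₀ such that for every σ ∈ (0, σ₀) and every t > 0, sup over x ∈ ℝ of |(V^{R₁}, U^{R₁}, ℰ^{R₁})(t,x) − (v^{r₁}, u^{r₁}, E^{r₁})(x/t)| ≤ (C/t) [ σ ln(1+t) + σ |ln σ| ], where (v^{r₁}, u^{r₁}, E^{r₁})(x/t) is the exact self-similar 1-rarefaction wave solution of the Euler Riemann problem and ℰ^{R₁} = Θ^{R₁} + |U^{R₁}|²/2. -/

import Mathlib

open MeasureTheory Real
open scoped RealInnerProductSpace BigOperators

noncomputable section

/-- The velocity space ℝ³. -/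
abbrev V3 : Type := EuclideanSpace ℝ (Fin 3)

/-- Build a vector of ℝ³ from three coordinates. -/
def vec3 (a b c : ℝ) : V3 := (WithLp.equiv 2 (Fin 3 → ℝ)).symm ![a, b, c]

/-- The gas constant `R = 2/3`. -/
def gasR : ℝ := 2 / 3

/-- Maxwellian `M_{[v,u,θ]}` with specific volume `v` (density `1/v`),
bulk velocity `u` and temperature `θ`. -/
def maxwellian (v : ℝ) (u : V3) (θ : ℝ) (ξ : V3) : ℝ :=
  (1 / v) * (2 * Real.pi * gasR * θ) ^ (-(3 : ℝ) / 2) *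
    Real.exp (-‖ξ - u‖ ^ 2 / (2 * gasR * θ))

/-- Maxwellian written with density `ρ`. -/
def maxwellianD (ρ : ℝ) (u : V3) (θ : ℝ) (ξ : V3) : ℝ :=
  ρ * (2 * Real.pi * gasR * θ) ^ (-(3 : ℝ) / 2) *
    Real.exp (-‖ξ - u‖ ^ 2 / (2 * gasR * θ))

/-- The unit sphere in velocity space. -/
abbrev Sph : Type := Metric.sphere (0 : V3) 1

/-- The hard-sphere Boltzmann collision operator. -/
def collQ (f g : V3 → ℝ) (ξ : V3) : ℝ :=
  (1 / 2) *
    ∫ ξs : V3,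
      (∫ Ω in {Ω : Sph | 0 ≤ ⟪ξ - ξs, (Ω : V3)⟫},
        ((f (ξ - ⟪ξ - ξs, (Ω : V3)⟫ • (Ω : V3)) * g (ξs + ⟪ξ - ξs, (Ω : V3)⟫ • (Ω : V3)) +
            f (ξs + ⟪ξ - ξs, (Ω : V3)⟫ • (Ω : V3)) * g (ξ - ⟪ξ - ξs, (Ω : V3)⟫ • (Ω : V3)) -
            f ξ * g ξs - f ξs * g ξ) * |⟪ξ - ξs, (Ω : V3)⟫|)
        ∂((volume : Measure V3).toSphere))

/-- Weighted L² norm `‖g‖_{L²_ξ(1/√M)}`. -/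
def wL2 (M g : V3 → ℝ) : ℝ := Real.sqrt (∫ ξ : V3, (g ξ) ^ 2 / M ξ)

/-- `g` is microscopic: orthogonal to the five collision invariants
(equivalently, to the null space of the linearized collision operator). -/
def microscopic (g : V3 → ℝ) : Prop :=
  (∫ ξ : V3, g ξ) = 0 ∧ (∀ i : Fin 3, (∫ ξ : V3, ξ i * g ξ) = 0) ∧
    (∫ ξ : V3, ‖ξ‖ ^ 2 * g ξ) = 0

/-- Density moment. -/
def mDen (F : V3 → ℝ) : ℝ := ∫ ξ : V3, F ξ
/-- Specific volume of a distribution. -/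
def mVol (F : V3 → ℝ) : ℝ := (mDen F)⁻¹
/-- Bulk velocity components. -/
def mVel (F : V3 → ℝ) (i : Fin 3) : ℝ := mVol F * ∫ ξ : V3, ξ i * F ξ
/-- Bulk velocity as a vector. -/
def mVelV (F : V3 → ℝ) : V3 := vec3 (mVel F 0) (mVel F 1) (mVel F 2)
/-- Specific total energy. -/
def mEngy (F : V3 → ℝ) : ℝ := mVol F * ∫ ξ : V3, (‖ξ‖ ^ 2 / 2) * F ξ
/-- Temperature. -/
def mTemp (F : V3 → ℝ) : ℝ :=
  mEngy F - (mVel F 0 ^ 2 + mVel F 1 ^ 2 + mVel F 2 ^ 2) / 2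

/-- First Lagrangian characteristic speed `λ₁(v,θ) = −√(10θ)/(3v)`. -/
def lam1 (v θ : ℝ) : ℝ := -Real.sqrt (10 * θ) / (3 * v)
/-- Third Lagrangian characteristic speed. -/
def lam3 (v θ : ℝ) : ℝ := Real.sqrt (10 * θ) / (3 * v)
/-- Entropy of the monatomic ideal gas (up to constants). -/
def entropy (v θ : ℝ) : ℝ := Real.log θ + (2 / 3) * Real.log v
/-- Temperature as a function of `v` and entropy `s`. -/
def presTheta (v s : ℝ) : ℝ := Real.exp s * v ^ (-(2 : ℝ) / 3)
/-- `λ₁` as a function of `v` and the entropy. -/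
def lam1s (v s : ℝ) : ℝ := lam1 v (presTheta v s)
/-- Pressure `p = 2θ/(3v)`. -/
def pres (v θ : ℝ) : ℝ := 2 * θ / (3 * v)

/-- Membership in the 1-rarefaction wave curve through `(v₊,u₁₊,θ₊)`. -/
def inR1 (v u1 θ vp u1p θp : ℝ) : Prop :=
  v < vp ∧ entropy v θ = entropy vp θp ∧
    u1 = u1p - ∫ η in vp..v, lam1s η (entropy vp θp)

/-- Membership in the contact discontinuity curve through `(v₊,u₁₊,θ₊)`. -/
def inCD (v u1 θ vp u1p θp : ℝ) : Prop :=
  u1 = u1p ∧ pres v θ = pres vp θp ∧ v ≠ vp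

/-- Membership in the 3-shock curve through `(v₊,u₁₊,θ₊)` with shock speed `s₃`:
Rankine–Hugoniot conditions and the Lax entropy condition. -/
def inS3 (v u1 θ vp u1p θp s3 : ℝ) : Prop :=
  -s3 * (vp - v) - (u1p - u1) = 0 ∧
  -s3 * (u1p - u1) + (pres vp θp - pres v θ) = 0 ∧
  -s3 * ((θp + u1p ^ 2 / 2) - (θ + u1 ^ 2 / 2)) + (pres vp θp * u1p - pres v θ * u1) = 0 ∧
  lam3 vp θp < s3 ∧ s3 < lam3 v θ

/-- Partial derivative in the first (time) variable. -/
def pdt (f : ℝ → ℝ → ℝ) (t x : ℝ) : ℝ := deriv (fun s => f s x) t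
/-- Partial derivative in the second (space) variable. -/
def pdx (f : ℝ → ℝ → ℝ) (t x : ℝ) : ℝ := deriv (fun y => f t y) x

end

noncomputable section

/-- Second space derivative. -/
def pdxx (f : ℝ → ℝ → ℝ) (t x : ℝ) : ℝ := deriv (fun y => pdx f t y) x

/-- `w` is the smooth global solution of the Burgers equation with `tanh(x/σ)`-smoothed
Riemann data `w_± `. -/
def burgersSol (wm wp σ : ℝ) (w : ℝ → ℝ → ℝ) : Prop :=
  ContDiff ℝ (⊤ : ℕ∞) (Function.uncurry w) ∧
  (∀ x : ℝ, w 0 x = (wp + wm) / 2 + ((wp - wm) / 2) * Real.tanh (x / σ)) ∧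
  (∀ t x : ℝ, 0 < t → pdt w t x + w t x * pdx w t x = 0)

/-- `(VR, UR, ΘR)` is the smooth approximate 1-rarefaction wave with right state
`(v₊,u₁₊,θ₊)` and smoothing parameter `σ`, built from the Burgers solution `w` with end
speeds `λ₁(v₋,θ₋) < λ₁(v₊,θ₊)`: the entropy is frozen at `s₊`, `λ₁(V^{R₁},Θ^{R₁}) = w`,
and `U₁^{R₁} = u₁₊ − ∫_{v₊}^{V^{R₁}} λ₁(v,s₊) dv` (the transversal components vanish). -/
def approxRarefaction (vm u1m θm vp u1p θp σ : ℝ)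
    (w VR UR ΘR : ℝ → ℝ → ℝ) : Prop :=
  burgersSol (lam1 vm θm) (lam1 vp θp) σ w ∧
  ContDiff ℝ (⊤ : ℕ∞) (Function.uncurry VR) ∧ ContDiff ℝ (⊤ : ℕ∞) (Function.uncurry UR) ∧
  ContDiff ℝ (⊤ : ℕ∞) (Function.uncurry ΘR) ∧
  ∀ t x : ℝ, 0 < VR t x ∧ 0 < ΘR t x ∧
    entropy (VR t x) (ΘR t x) = entropy vp θp ∧
    lam1 (VR t x) (ΘR t x) = w t x ∧
    UR t x = u1p - ∫ η in vp..(VR t x), lam1s η (entropy vp θp)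

/-- Total strength of the 1-rarefaction wave. -/
def rarStrength (vm u1m θm vp u1p θp : ℝ) : ℝ :=
  |vp - vm| + |u1p - u1m| + |θp - θm|

noncomputable section

/-- The exact self-similar 1-rarefaction wave `(v^{r₁},u^{r₁},θ^{r₁})(x/t)` of the
Riemann problem, connecting `(v₋,u₁₋,θ₋)` to `(v₊,u₁₊,θ₊)`. -/
def rarefactionFan (vm u1m θm vp u1p θp : ℝ) (vr ur θr : ℝ → ℝ) : Prop :=
  (∀ ζ : ℝ, ζ ≤ lam1 vm θm → vr ζ = vm ∧ ur ζ = u1m ∧ θr ζ = θm) ∧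
  (∀ ζ : ℝ, lam1 vp θp ≤ ζ → vr ζ = vp ∧ ur ζ = u1p ∧ θr ζ = θp) ∧
  (∀ ζ : ℝ, lam1 vm θm ≤ ζ → ζ ≤ lam1 vp θp →
    0 < vr ζ ∧ 0 < θr ζ ∧
    entropy (vr ζ) (θr ζ) = entropy vp θp ∧
    lam1 (vr ζ) (θr ζ) = ζ ∧
    ur ζ = u1p - ∫ η in vp..(vr ζ), lam1s η (entropy vp θp))

noncomputable section

/-!
Burgers solutions are constant along characteristics, so `w t x = w 0 y` with
`x = y + t * w 0 y`, while the centred fan takes at `x / t = w 0 y + y / t` the value obtained by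
projecting `x / t` onto `[w₋, w₊]`. If `|y|` is at most `δ = σ ln(1 + t) + σ |ln σ|`, the two
differ by at most `|y| / t ≤ δ / t`, because the projection is a contraction. If `|y| > δ`, both
values lie between `w 0 y` and the same end state `w₊` or `w₋`, and the exponential tail of `tanh`
bounds their distance by a multiple of `exp (-2δ / σ) ≤ σ / (1 + t) ≤ δ / t`.

The approximate and the exact wave at a point are both states of the 1-rarefaction curve through
the right state, with characteristic speeds `w t x` and the projection of `x / t`. On `[w₋, w₊]`,
which stays away from the vacuum value `0`, the state is a `C¹` function of the speed, hence a
Lipschitz one, and the scalar estimate carries over.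
-/

section PartialDerivatives

variable {w : ℝ → ℝ → ℝ}

lemma pdt_eq_fderiv {t x : ℝ} (hw : DifferentiableAt ℝ (Function.uncurry w) (t, x)) :
    pdt w t x = fderiv ℝ (Function.uncurry w) (t, x) (1, 0) := by
  have hslice : HasDerivAt (fun s : ℝ => (s, x)) ((1 : ℝ), (0 : ℝ)) t :=
    (hasDerivAt_id t).prodMk (hasDerivAt_const t x)
  exact (hw.hasFDerivAt.comp_hasDerivAt t hslice).deriv

lemma pdx_eq_fderiv {t x : ℝ} (hw : DifferentiableAt ℝ (Function.uncurry w) (t, x)) :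
    pdx w t x = fderiv ℝ (Function.uncurry w) (t, x) (0, 1) := by
  have hslice : HasDerivAt (fun y : ℝ => (t, y)) ((0 : ℝ), (1 : ℝ)) x :=
    (hasDerivAt_const x t).prodMk (hasDerivAt_id x)
  exact (hw.hasFDerivAt.comp_hasDerivAt x hslice).deriv

lemma continuous_pdt (hw : ContDiff ℝ 1 (Function.uncurry w)) :
    Continuous fun p : ℝ × ℝ => pdt w p.1 p.2 := by
  simp only [pdt_eq_fderiv (hw.differentiable one_ne_zero _)]
  exact (hw.continuous_fderiv one_ne_zero).clm_apply continuous_const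

lemma continuous_pdx (hw : ContDiff ℝ 1 (Function.uncurry w)) :
    Continuous fun p : ℝ × ℝ => pdx w p.1 p.2 := by
  simp only [pdx_eq_fderiv (hw.differentiable one_ne_zero _)]
  exact (hw.continuous_fderiv one_ne_zero).clm_apply continuous_const

lemma hasDerivAt_comp_line {x c s : ℝ}
    (hw : DifferentiableAt ℝ (Function.uncurry w) (s, x + s * c)) :
    HasDerivAt (fun r => w r (x + r * c))
      (pdt w s (x + s * c) + c * pdx w s (x + s * c)) s := by
  have hline : HasDerivAt (fun r : ℝ => (r, x + r * c)) ((1 : ℝ), c) s :=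
    (hasDerivAt_id s).prodMk ((hasDerivAt_mul_const c).const_add x)
  have hdir : ((1 : ℝ), c) = (1, 0) + c • ((0 : ℝ), (1 : ℝ)) := by ext <;> simp
  have hcomp := hw.hasFDerivAt.comp_hasDerivAt s hline
  rwa [hdir, map_add, map_smul, ← pdt_eq_fderiv hw, ← pdx_eq_fderiv hw] at hcomp

end PartialDerivatives

section Characteristics

variable {w : ℝ → ℝ → ℝ} {a : ℝ → ℝ}

lemma pdt_add_mul_pdx_eq_zero_of_nonneg (hw : ContDiff ℝ 1 (Function.uncurry w))
    (ha : Continuous a) (hpde : ∀ t x : ℝ, 0 < t → pdt w t x + a (w t x) * pdx w t x = 0)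
    {t : ℝ} (ht : 0 ≤ t) (x : ℝ) : pdt w t x + a (w t x) * pdx w t x = 0 := by
  have hslice : Continuous fun s : ℝ => (s, x) := by fun_prop
  have hcont : Continuous fun s => pdt w s x + a (w s x) * pdx w s x :=
    ((continuous_pdt hw).comp hslice).add
      ((ha.comp (hw.continuous.comp hslice)).mul ((continuous_pdx hw).comp hslice))
  have hzero : Set.EqOn (fun s => pdt w s x + a (w s x) * pdx w s x) (fun _ => 0) (Set.Ioi 0) :=
    fun s hs => hpde s x hs
  exact hzero.closure hcont continuous_const (by rwa [closure_Ioi, Set.mem_Ici])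

-- Along the straight line of speed `a (w 0 x)` the defect `w - w 0 x` has derivative
-- `(a (w 0 x) - a w) * w_x`, which is linearly bounded by the defect, so Grönwall applies.
lemma eq_initial_along_characteristic {L : NNReal} (hw : ContDiff ℝ 1 (Function.uncurry w))
    (ha : LipschitzWith L a)
    (hpde : ∀ t x : ℝ, 0 < t → pdt w t x + a (w t x) * pdx w t x = 0)
    {t : ℝ} (ht : 0 ≤ t) (x : ℝ) : w t (x + t * a (w 0 x)) = w 0 x := by
  set c := a (w 0 x)
  have hderiv (s : ℝ) : HasDerivAt (fun r => w r (x + r * c) - w 0 x)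
      (pdt w s (x + s * c) + c * pdx w s (x + s * c)) s :=
    (hasDerivAt_comp_line (hw.differentiable one_ne_zero _)).sub_const _
  have hpdx : Continuous fun s : ℝ => pdx w s (x + s * c) :=
    (continuous_pdx hw).comp (f := fun s : ℝ => (s, x + s * c)) (by fun_prop)
  obtain ⟨M, hM⟩ := isCompact_Icc.exists_bound_of_continuousOn (s := Set.Icc 0 t) hpdx.continuousOn
  have hbound (s : ℝ) (hs : s ∈ Set.Ico 0 t) :
      ‖pdt w s (x + s * c) + c * pdx w s (x + s * c)‖ ≤ L * M * ‖w s (x + s * c) - w 0 x‖ := by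
    have hdefect : pdt w s (x + s * c) + c * pdx w s (x + s * c)
        = (c - a (w s (x + s * c))) * pdx w s (x + s * c) := by
      linear_combination pdt_add_mul_pdx_eq_zero_of_nonneg hw ha.continuous hpde hs.1 (x + s * c)
    calc ‖pdt w s (x + s * c) + c * pdx w s (x + s * c)‖
        = ‖c - a (w s (x + s * c))‖ * ‖pdx w s (x + s * c)‖ := by rw [hdefect, norm_mul]
      _ ≤ (L * ‖w 0 x - w s (x + s * c)‖) * M := by
          gcongr
          · exact ha.norm_sub_le _ _
          · exact hM s (Set.Ico_subset_Icc_self hs)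
      _ = L * M * ‖w s (x + s * c) - w 0 x‖ := by rw [norm_sub_rev]; ring
  refine sub_eq_zero.1 (eq_zero_of_abs_deriv_le_mul_abs_self_of_eq_zero_right
    (f := fun r => w r (x + r * c) - w 0 x) (fun s _ => (hderiv s).continuousAt.continuousWithinAt)
    (fun s _ => (hderiv s).hasDerivWithinAt) ?_ hbound t (Set.right_mem_Icc.2 ht))
  simp

lemma surjective_self_add_of_bounded {g : ℝ → ℝ} {m M : ℝ} (hg : Continuous g)
    (hm : ∀ y, m ≤ g y) (hM : ∀ y, g y ≤ M) : Function.Surjective fun y => y + g y :=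
  (continuous_id.add hg).surjective
    (Filter.tendsto_atTop_add_right_of_le _ m Filter.tendsto_id hm)
    (Filter.tendsto_atBot_add_right_of_ge _ M Filter.tendsto_id hM)

lemma exists_burgers_characteristic_foot {wm wp : ℝ} (hw : ContDiff ℝ 1 (Function.uncurry w))
    (hpde : ∀ t x : ℝ, 0 < t → pdt w t x + w t x * pdx w t x = 0)
    (hdata : ∀ y, w 0 y ∈ Set.Icc wm wp) {t : ℝ} (ht : 0 ≤ t) (x : ℝ) :
    ∃ y, y + t * w 0 y = x ∧ w t x = w 0 y := by
  have hcont : Continuous fun y => t * w 0 y :=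
    continuous_const.mul (hw.continuous.comp (f := fun y : ℝ => ((0 : ℝ), y)) (by fun_prop))
  obtain ⟨y, hy⟩ := surjective_self_add_of_bounded hcont
    (fun y => mul_le_mul_of_nonneg_left (hdata y).1 ht)
    (fun y => mul_le_mul_of_nonneg_left (hdata y).2 ht) x
  refine ⟨y, hy, ?_⟩
  rw [← hy]
  exact eq_initial_along_characteristic (a := id) hw LipschitzWith.id hpde ht y

end Characteristics

section Projection

variable {a b W d : ℝ}

lemma abs_sub_projIcc_add_le_abs (hab : a ≤ b) (hW : W ∈ Set.Icc a b) :
    |W - Set.projIcc a b hab (W + d)| ≤ |d| := by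
  simpa [Set.projIcc_of_mem hab hW] using
    Set.abs_projIcc_sub_projIcc (c := W) (d := W + d) hab

lemma abs_sub_projIcc_add_le_right_sub (hab : a ≤ b) (hW : W ≤ b) (hd : 0 ≤ d) :
    |W - Set.projIcc a b hab (W + d)| ≤ b - W := by
  have hle : W ≤ Set.projIcc a b hab (W + d) :=
    le_max_of_le_right (le_min hW (le_add_of_nonneg_right hd))
  rw [abs_of_nonpos (sub_nonpos.2 hle)]
  linarith [(Set.projIcc a b hab (W + d)).2.2]

lemma abs_sub_projIcc_add_le_sub_left (hab : a ≤ b) (hW : a ≤ W) (hd : d ≤ 0) :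
    |W - Set.projIcc a b hab (W + d)| ≤ W - a := by
  have hle : Set.projIcc a b hab (W + d) ≤ W :=
    max_le hW (min_le_of_right_le (add_le_of_nonpos_right hd))
  rw [abs_of_nonneg (sub_nonneg.2 hle)]
  linarith [(Set.projIcc a b hab (W + d)).2.1]

end Projection

section SmoothedRiemannData

lemma one_sub_tanh_le (y : ℝ) : 1 - Real.tanh y ≤ 2 * Real.exp (-2 * y) := by
  have hmul : Real.exp y * Real.exp (-y) = 1 := by rw [← Real.exp_add]; simp
  have hsq : Real.exp (-2 * y) = Real.exp (-y) * Real.exp (-y) := by rw [← Real.exp_add]; ring_nf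
  calc 1 - Real.tanh y = 2 * Real.exp (-y) / (Real.exp y + Real.exp (-y)) := by
        rw [Real.tanh_eq_sinh_div_cosh, Real.sinh_eq, Real.cosh_eq]
        field_simp
        ring
    _ ≤ 2 * Real.exp (-y) / Real.exp y := by
        gcongr
        linarith [Real.exp_pos (-y)]
    _ = 2 * Real.exp (-2 * y) := by
        rw [hsq, div_eq_iff (Real.exp_pos y).ne']
        linear_combination -2 * Real.exp (-y) * hmul

/-- The initial data of the Burgers equation: the jump from `wm` to `wp` smoothed over the length
`σ`. -/
def smoothedRiemannData (wm wp σ x : ℝ) : ℝ :=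
  (wp + wm) / 2 + ((wp - wm) / 2) * Real.tanh (x / σ)

variable {wm wp σ x : ℝ}

lemma smoothedRiemannData_mem_Icc (hw : wm ≤ wp) :
    smoothedRiemannData wm wp σ x ∈ Set.Icc wm wp := by
  obtain ⟨hlower, hupper⟩ := Real.tanh_bijOn.mapsTo (Set.mem_univ (x / σ))
  unfold smoothedRiemannData
  constructor <;> nlinarith

lemma right_sub_smoothedRiemannData_le (hw : wm ≤ wp) :
    wp - smoothedRiemannData wm wp σ x ≤ (wp - wm) * Real.exp (-2 * (x / σ)) :=
  calc wp - smoothedRiemannData wm wp σ x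
      = (wp - wm) / 2 * (1 - Real.tanh (x / σ)) := by unfold smoothedRiemannData; ring
    _ ≤ (wp - wm) / 2 * (2 * Real.exp (-2 * (x / σ))) :=
        mul_le_mul_of_nonneg_left (one_sub_tanh_le _) (by linarith)
    _ = (wp - wm) * Real.exp (-2 * (x / σ)) := by ring

lemma smoothedRiemannData_sub_left_le (hw : wm ≤ wp) :
    smoothedRiemannData wm wp σ x - wm ≤ (wp - wm) * Real.exp (-2 * (-x / σ)) :=
  calc smoothedRiemannData wm wp σ x - wm
      = (wp - wm) / 2 * (1 - Real.tanh (-x / σ)) := by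
        rw [neg_div, Real.tanh_neg]; unfold smoothedRiemannData; ring
    _ ≤ (wp - wm) / 2 * (2 * Real.exp (-2 * (-x / σ))) :=
        mul_le_mul_of_nonneg_left (one_sub_tanh_le _) (by linarith)
    _ = (wp - wm) * Real.exp (-2 * (-x / σ)) := by ring

end SmoothedRiemannData

section ScalarEstimate

/-- The half-width of the initial layer around the jump outside of which the smoothed data agree
with the end states up to a multiple of `σ / (1 + t)`. -/
def layerWidth (σ t : ℝ) : ℝ := σ * Real.log (1 + t) + σ * |Real.log σ|

variable {wm wp σ t : ℝ} {w : ℝ → ℝ → ℝ}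

lemma layerWidth_nonneg (hσ : 0 ≤ σ) (ht : 0 ≤ t) : 0 ≤ layerWidth σ t := by
  have hlog : 0 ≤ Real.log (1 + t) := Real.log_nonneg (by linarith)
  unfold layerWidth
  positivity

lemma le_layerWidth (hσ : 0 < σ) (hσe : σ ≤ Real.exp (-1)) (ht : 0 ≤ t) :
    σ ≤ layerWidth σ t := by
  have hlog : 0 ≤ Real.log (1 + t) := Real.log_nonneg (by linarith)
  have hlogσ : 1 ≤ |Real.log σ| :=
    le_abs.2 (Or.inr (by linarith [(Real.log_le_iff_le_exp hσ).2 hσe]))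
  unfold layerWidth
  nlinarith [mul_nonneg hσ.le hlog]

lemma exp_neg_two_mul_div_le_layerWidth_div (hσ : 0 < σ) (hσe : σ ≤ Real.exp (-1)) (ht : 0 < t)
    {y : ℝ} (hy : layerWidth σ t ≤ y) : Real.exp (-2 * (y / σ)) ≤ layerWidth σ t / t := by
  have hy0 : 0 ≤ y / σ := div_nonneg ((layerWidth_nonneg hσ.le ht.le).trans hy) hσ.le
  have hyσ : Real.log (1 + t) + |Real.log σ| ≤ y / σ := by
    rw [le_div_iff₀ hσ]
    unfold layerWidth at hy
    linarith
  calc Real.exp (-2 * (y / σ)) ≤ Real.exp (Real.log σ - Real.log (1 + t)) := by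
        gcongr
        linarith [neg_abs_le (Real.log σ)]
    _ = σ / (1 + t) := by rw [Real.exp_sub, Real.exp_log hσ, Real.exp_log (by linarith)]
    _ ≤ layerWidth σ t / t := by
        gcongr
        · exact layerWidth_nonneg hσ.le ht.le
        · exact le_layerWidth hσ hσe ht.le
        · linarith

lemma abs_smoothedRiemannData_sub_projIcc_le (hw : wm ≤ wp) (hσ : 0 < σ)
    (hσe : σ ≤ Real.exp (-1)) (ht : 0 < t) (y : ℝ) :
    |smoothedRiemannData wm wp σ y
        - Set.projIcc wm wp hw (smoothedRiemannData wm wp σ y + y / t)|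
      ≤ (1 + (wp - wm)) * (layerWidth σ t / t) := by
  have hmem := smoothedRiemannData_mem_Icc (σ := σ) (x := y) hw
  have hδ := layerWidth_nonneg hσ.le ht.le
  have hδt := div_nonneg hδ ht.le
  have hjump : 0 ≤ wp - wm := sub_nonneg.2 hw
  rcases le_or_gt |y| (layerWidth σ t) with hinner | houter
  · calc _ ≤ |y / t| := abs_sub_projIcc_add_le_abs hw hmem
      _ = |y| / t := by rw [abs_div, abs_of_pos ht]
      _ ≤ 1 * (layerWidth σ t / t) := by rw [one_mul]; gcongr
      _ ≤ (1 + (wp - wm)) * (layerWidth σ t / t) := by gcongr; linarith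
  suffices htail : |smoothedRiemannData wm wp σ y
      - Set.projIcc wm wp hw (smoothedRiemannData wm wp σ y + y / t)|
        ≤ (wp - wm) * (layerWidth σ t / t) by linarith
  rcases lt_abs.1 houter with hright | hleft
  · calc _ ≤ wp - smoothedRiemannData wm wp σ y :=
          abs_sub_projIcc_add_le_right_sub hw hmem.2 (div_nonneg (hδ.trans hright.le) ht.le)
      _ ≤ (wp - wm) * Real.exp (-2 * (y / σ)) := right_sub_smoothedRiemannData_le hw
      _ ≤ _ := mul_le_mul_of_nonneg_left
          (exp_neg_two_mul_div_le_layerWidth_div hσ hσe ht hright.le) hjump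
  · calc _ ≤ smoothedRiemannData wm wp σ y - wm :=
          abs_sub_projIcc_add_le_sub_left hw hmem.1
            (div_nonpos_of_nonpos_of_nonneg (by linarith) ht.le)
      _ ≤ (wp - wm) * Real.exp (-2 * (-y / σ)) := smoothedRiemannData_sub_left_le hw
      _ ≤ _ := mul_le_mul_of_nonneg_left
          (exp_neg_two_mul_div_le_layerWidth_div hσ hσe ht hleft.le) hjump

lemma burgersSol.exists_foot (h : burgersSol wm wp σ w)
    (hw : wm ≤ wp) (ht : 0 ≤ t) (x : ℝ) :
    ∃ y, y + t * smoothedRiemannData wm wp σ y = x ∧ w t x = smoothedRiemannData wm wp σ y := by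
  obtain ⟨hsmooth, hdata, hpde⟩ := h
  change ∀ y, w 0 y = smoothedRiemannData wm wp σ y at hdata
  simpa only [hdata] using exists_burgers_characteristic_foot (hsmooth.of_le (by simp)) hpde
    (fun y => hdata y ▸ smoothedRiemannData_mem_Icc hw) ht x

lemma burgersSol.mem_Icc (h : burgersSol wm wp σ w)
    (hw : wm ≤ wp) (ht : 0 ≤ t) (x : ℝ) : w t x ∈ Set.Icc wm wp := by
  obtain ⟨y, -, hwy⟩ := h.exists_foot hw ht x
  exact hwy ▸ smoothedRiemannData_mem_Icc hw

lemma burgersSol.abs_sub_projIcc_le (h : burgersSol wm wp σ w)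
    (hw : wm ≤ wp) (hσ : 0 < σ) (hσe : σ ≤ Real.exp (-1)) (ht : 0 < t) (x : ℝ) :
    |w t x - Set.projIcc wm wp hw (x / t)| ≤ (1 + (wp - wm)) * (layerWidth σ t / t) := by
  obtain ⟨y, hxy, hwy⟩ := h.exists_foot hw ht.le x
  have hxt : x / t = smoothedRiemannData wm wp σ y + y / t := by rw [← hxy]; field_simp; ring
  rw [hwy, hxt]
  exact abs_smoothedRiemannData_sub_projIcc_le hw hσ hσe ht y

end ScalarEstimate

section Isentrope

/-- The coefficient in `λ₁(v, s) = -speedCoeff s * v ^ (-4/3)`, the first characteristic speed along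
the isentrope of entropy `s`. -/
def speedCoeff (s : ℝ) : ℝ := Real.sqrt (10 * Real.exp s) / 3

lemma speedCoeff_pos (s : ℝ) : 0 < speedCoeff s := by unfold speedCoeff; positivity

lemma lam1s_eq {v : ℝ} (hv : 0 < v) (s : ℝ) :
    lam1s v s = -speedCoeff s * v ^ (-(4 : ℝ) / 3) := by
  have hsqrt : Real.sqrt (10 * (Real.exp s * v ^ (-(2 : ℝ) / 3)))
      = Real.sqrt (10 * Real.exp s) * v ^ (-(1 : ℝ) / 3) := by
    rw [← mul_assoc, Real.sqrt_mul (by positivity), Real.sqrt_eq_rpow (v ^ (-(2 : ℝ) / 3)),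
      ← Real.rpow_mul hv.le]
    norm_num
  have hpow : v ^ (-(4 : ℝ) / 3) = v ^ (-(1 : ℝ) / 3) / v := by
    rw [show (-(4 : ℝ) / 3) = -(1 : ℝ) / 3 - 1 by norm_num, Real.rpow_sub_one hv.ne']
  rw [lam1s, lam1, presTheta, speedCoeff, hsqrt, hpow]
  field_simp

lemma presTheta_entropy {v θ : ℝ} (hv : 0 < v) (hθ : 0 < θ) : presTheta v (entropy v θ) = θ := by
  rw [presTheta, entropy, Real.rpow_def_of_pos hv, ← Real.exp_add,
    show Real.log θ + 2 / 3 * Real.log v + Real.log v * (-2 / 3) = Real.log θ by ring,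
    Real.exp_log hθ]

lemma lam1_eq {v θ : ℝ} (hv : 0 < v) (hθ : 0 < θ) :
    lam1 v θ = -speedCoeff (entropy v θ) * v ^ (-(4 : ℝ) / 3) := by
  rw [← lam1s_eq hv, lam1s, presTheta_entropy hv hθ]

lemma lam1_neg {v θ : ℝ} (hv : 0 < v) (hθ : 0 < θ) : lam1 v θ < 0 :=
  div_neg_of_neg_of_pos (neg_neg_of_pos (Real.sqrt_pos.2 (by positivity))) (by positivity)

lemma lam1_lt_lam1_of_entropy_eq {v v' θ θ' : ℝ} (hv : 0 < v) (hθ : 0 < θ) (hθ' : 0 < θ')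
    (hvv' : v < v') (hentropy : entropy v θ = entropy v' θ') : lam1 v θ < lam1 v' θ' := by
  rw [lam1_eq hv hθ, lam1_eq (hv.trans hvv') hθ', hentropy]
  exact mul_lt_mul_of_neg_left (Real.rpow_lt_rpow_of_neg hv hvv' (by norm_num))
    (neg_neg_of_pos (speedCoeff_pos _))

lemma integral_lam1s {v v' : ℝ} (hv : 0 < v) (hv' : 0 < v') (s : ℝ) :
    ∫ η in v..v', lam1s η s
      = 3 * speedCoeff s * (v' ^ (-(1 : ℝ) / 3) - v ^ (-(1 : ℝ) / 3)) := by
  have hpos : ∀ η ∈ Set.uIcc v v', 0 < η := fun η hη => (lt_min hv hv').trans_le hη.1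
  rw [intervalIntegral.integral_congr fun η hη => lam1s_eq (hpos η hη) s,
    intervalIntegral.integral_const_mul,
    integral_rpow (Or.inr ⟨by norm_num, fun h => (hpos 0 h).false⟩)]
  norm_num
  ring

end Isentrope

section RarefactionCurve

/-- `(v, u, θ)` is the state with characteristic speed `c` on the (two-sided) 1-rarefaction curve of
entropy `s` through the state with specific volume `vp` and velocity `up`. The approximate and the
exact wave are both described by this relation. -/
structure IsRarefactionState (s vp up c v u θ : ℝ) : Prop where
  volume_pos : 0 < v
  temperature_pos : 0 < θ
  entropy_eq : entropy v θ = s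
  speed_eq : lam1 v θ = c
  velocity_eq : u = up - ∫ η in vp..v, lam1s η s

/-- The specific volume on the 1-rarefaction curve as a function of the characteristic speed `c`:
the solution `v` of `-speedCoeff s * v ^ (-4/3) = c`. -/
def rarefactionVolume (s c : ℝ) : ℝ := (-c / speedCoeff s) ^ (-(3 : ℝ) / 4)

/-- The velocity on the 1-rarefaction curve as a function of the characteristic speed `c`, with the
integral over the specific volume evaluated. -/
def rarefactionVelocity (s vp up c : ℝ) : ℝ :=
  up - 3 * speedCoeff s * ((-c / speedCoeff s) ^ ((1 : ℝ) / 4) - vp ^ (-(1 : ℝ) / 3))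

/-- The total energy `θ + u² / 2` on the 1-rarefaction curve as a function of the characteristic
speed `c`. -/
def rarefactionEnergy (s vp up c : ℝ) : ℝ :=
  Real.exp s * (-c / speedCoeff s) ^ ((1 : ℝ) / 2) + rarefactionVelocity s vp up c ^ 2 / 2

namespace IsRarefactionState

variable {s vp up c v u θ : ℝ}

lemma neg_speed_div_rpow (h : IsRarefactionState s vp up c v u θ) (p : ℝ) :
    (-c / speedCoeff s) ^ p = v ^ (-(4 : ℝ) / 3 * p) := by
  have hbase : -c / speedCoeff s = v ^ (-(4 : ℝ) / 3) := by
    rw [← h.speed_eq, lam1_eq h.volume_pos h.temperature_pos, h.entropy_eq,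
      neg_mul, neg_neg, mul_div_cancel_left₀ _ (speedCoeff_pos s).ne']
  rw [hbase, Real.rpow_mul h.volume_pos.le]

lemma eq_rarefactionVolume (h : IsRarefactionState s vp up c v u θ) :
    v = rarefactionVolume s c := by
  rw [rarefactionVolume, h.neg_speed_div_rpow]
  norm_num

lemma eq_rarefactionVelocity (hvp : 0 < vp) (h : IsRarefactionState s vp up c v u θ) :
    u = rarefactionVelocity s vp up c := by
  rw [rarefactionVelocity, h.neg_speed_div_rpow, h.velocity_eq, integral_lam1s hvp h.volume_pos]
  norm_num

lemma eq_rarefactionEnergy (hvp : 0 < vp) (h : IsRarefactionState s vp up c v u θ) :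
    θ + u ^ 2 / 2 = rarefactionEnergy s vp up c := by
  have hθ : θ = Real.exp s * v ^ (-(2 : ℝ) / 3) := by
    rw [← h.entropy_eq, ← presTheta, presTheta_entropy h.volume_pos h.temperature_pos]
  rw [rarefactionEnergy, ← h.eq_rarefactionVelocity hvp, h.neg_speed_div_rpow, hθ]
  norm_num

end IsRarefactionState

variable {s vp up : ℝ} {S : Set ℝ}

lemma contDiffOn_neg_div_speedCoeff_rpow (hS : ∀ c ∈ S, c < 0) (p : ℝ) :
    ContDiffOn ℝ 1 (fun c => (-c / speedCoeff s) ^ p) S :=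
  ContDiffOn.rpow_const_of_ne (by fun_prop) fun c hc =>
    (div_pos (neg_pos.2 (hS c hc)) (speedCoeff_pos s)).ne'

lemma contDiffOn_rarefactionVolume (hS : ∀ c ∈ S, c < 0) :
    ContDiffOn ℝ 1 (rarefactionVolume s) S :=
  contDiffOn_neg_div_speedCoeff_rpow hS _

lemma contDiffOn_rarefactionVelocity (hS : ∀ c ∈ S, c < 0) :
    ContDiffOn ℝ 1 (rarefactionVelocity s vp up) S :=
  contDiffOn_const.sub (contDiffOn_const.mul
    ((contDiffOn_neg_div_speedCoeff_rpow hS _).sub contDiffOn_const))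

lemma contDiffOn_rarefactionEnergy (hS : ∀ c ∈ S, c < 0) :
    ContDiffOn ℝ 1 (rarefactionEnergy s vp up) S :=
  (contDiffOn_const.mul (contDiffOn_neg_div_speedCoeff_rpow hS _)).add
    (((contDiffOn_rarefactionVelocity hS).pow 2).div_const 2)

lemma exists_abs_sub_le_mul_of_contDiffOn_Icc {f : ℝ → ℝ} {a b : ℝ}
    (hf : ContDiffOn ℝ 1 f (Set.Icc a b)) :
    ∃ K : ℝ, 0 ≤ K ∧ ∀ x ∈ Set.Icc a b, ∀ y ∈ Set.Icc a b, |f x - f y| ≤ K * |x - y| := by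
  obtain ⟨K, hK⟩ := hf.exists_lipschitzOnWith one_ne_zero (convex_Icc a b) isCompact_Icc
  exact ⟨K, K.2, fun x hx y hy => hK.dist_le_mul x hx y hy⟩

lemma exists_abs_sub_isRarefactionState_le (s up a : ℝ) {b : ℝ} (hvp : 0 < vp) (hb : b < 0) :
    ∃ K : ℝ, 0 < K ∧ ∀ c ∈ Set.Icc a b, ∀ c' ∈ Set.Icc a b, ∀ v u θ v' u' θ' : ℝ,
      IsRarefactionState s vp up c v u θ → IsRarefactionState s vp up c' v' u' θ' →
      |v - v'| + |u - u'| + |(θ + u ^ 2 / 2) - (θ' + u' ^ 2 / 2)| ≤ K * |c - c'| := by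
  have hneg : ∀ c ∈ Set.Icc a b, c < 0 := fun c hc => hc.2.trans_lt hb
  obtain ⟨K₁, hK₁, hV⟩ :=
    exists_abs_sub_le_mul_of_contDiffOn_Icc (contDiffOn_rarefactionVolume (s := s) hneg)
  obtain ⟨K₂, hK₂, hU⟩ := exists_abs_sub_le_mul_of_contDiffOn_Icc
    (contDiffOn_rarefactionVelocity (s := s) (vp := vp) (up := up) hneg)
  obtain ⟨K₃, hK₃, hE⟩ := exists_abs_sub_le_mul_of_contDiffOn_Icc
    (contDiffOn_rarefactionEnergy (s := s) (vp := vp) (up := up) hneg)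
  refine ⟨K₁ + K₂ + K₃ + 1, by positivity, fun c hc c' hc' v u θ v' u' θ' h h' => ?_⟩
  rw [h.eq_rarefactionEnergy hvp, h'.eq_rarefactionEnergy hvp, h.eq_rarefactionVelocity hvp,
    h'.eq_rarefactionVelocity hvp, h.eq_rarefactionVolume, h'.eq_rarefactionVolume]
  linarith [hV c hc c' hc', hU c hc c' hc', hE c hc c' hc', abs_nonneg (c - c')]

end RarefactionCurve

section Waves

variable {vm um θm vp up θp : ℝ}

lemma approxRarefaction.isRarefactionState {σ : ℝ} {w VR UR ΘR : ℝ → ℝ → ℝ}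
    (h : approxRarefaction vm um θm vp up θp σ w VR UR ΘR) (t x : ℝ) :
    IsRarefactionState (entropy vp θp) vp up (w t x) (VR t x) (UR t x) (ΘR t x) := by
  obtain ⟨-, -, -, -, hstate⟩ := h
  obtain ⟨hv, hθ, hentropy, hspeed, hvel⟩ := hstate t x
  exact ⟨hv, hθ, hentropy, hspeed, hvel⟩

lemma rarefactionFan.isRarefactionState {vr ur θr : ℝ → ℝ}
    (h : rarefactionFan vm um θm vp up θp vr ur θr) (hspeed : lam1 vm θm ≤ lam1 vp θp) (ζ : ℝ) :
    IsRarefactionState (entropy vp θp) vp up (Set.projIcc _ _ hspeed ζ) (vr ζ) (ur ζ) (θr ζ) := by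
  obtain ⟨hleft, hright, hmiddle⟩ := h
  have hinside (c : ℝ) (hc : c ∈ Set.Icc (lam1 vm θm) (lam1 vp θp)) :
      IsRarefactionState (entropy vp θp) vp up c (vr c) (ur c) (θr c) := by
    obtain ⟨hv, hθ, hentropy, hlam, hvel⟩ := hmiddle c hc.1 hc.2
    exact ⟨hv, hθ, hentropy, hlam, hvel⟩
  rcases le_total ζ (lam1 vm θm) with hζ | hmζ
  · obtain ⟨hv, hu, hθ⟩ := hleft ζ hζ
    obtain ⟨hv', hu', hθ'⟩ := hleft _ le_rfl
    rw [Set.projIcc_of_le_left hspeed hζ, hv, hu, hθ]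
    simpa only [hv', hu', hθ'] using hinside _ (Set.left_mem_Icc.2 hspeed)
  rcases le_total (lam1 vp θp) ζ with hζ | hζp
  · obtain ⟨hv, hu, hθ⟩ := hright ζ hζ
    obtain ⟨hv', hu', hθ'⟩ := hright _ le_rfl
    rw [Set.projIcc_of_right_le hspeed hζ, hv, hu, hθ]
    simpa only [hv', hu', hθ'] using hinside _ (Set.right_mem_Icc.2 hspeed)
  · rw [Set.projIcc_of_mem hspeed ⟨hmζ, hζp⟩]
    exact hinside ζ ⟨hmζ, hζp⟩

end Waves

/-- Lemma 2.1 (4): there are `C, σ₀ > 0` such that for every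
`σ ∈ (0,σ₀)` and `t > 0`, the approximate rarefaction wave (with smoothing parameter
`σ`) is within `(C/t)[σ ln(1+t) + σ|ln σ|]` of the exact self-similar rarefaction wave
`(v^{r₁},u^{r₁},E^{r₁})(x/t)`, uniformly in `x`. -/
theorem approx_rarefaction_close_to_exact
    (vm u1m θm vp u1p θp : ℝ)
    (hvm : 0 < vm) (hvp : 0 < vp) (hθm : 0 < θm) (hθp : 0 < θp)
    (hR1 : inR1 vm u1m θm vp u1p θp)
    (w VR UR ΘR : ℝ → ℝ → ℝ → ℝ)
    (hprof : ∀ σ : ℝ, 0 < σ →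
      approxRarefaction vm u1m θm vp u1p θp σ (w σ) (VR σ) (UR σ) (ΘR σ))
    (vr ur θr : ℝ → ℝ)
    (hfan : rarefactionFan vm u1m θm vp u1p θp vr ur θr) :
    ∃ C σ₀ : ℝ, 0 < C ∧ 0 < σ₀ ∧
      ∀ σ : ℝ, 0 < σ → σ < σ₀ →
        ∀ t : ℝ, 0 < t → ∀ x : ℝ,
          |VR σ t x - vr (x / t)| + |UR σ t x - ur (x / t)| +
              |(ΘR σ t x + (UR σ t x) ^ 2 / 2) - (θr (x / t) + (ur (x / t)) ^ 2 / 2)|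
            ≤ C / t * (σ * Real.log (1 + t) + σ * |Real.log σ|) := by
  obtain ⟨hv, hentropy, -⟩ := hR1
  have hspeed : lam1 vm θm ≤ lam1 vp θp :=
    (lam1_lt_lam1_of_entropy_eq hvm hθm hθp hv hentropy).le
  obtain ⟨K, hK, hlip⟩ := exists_abs_sub_isRarefactionState_le (entropy vp θp) u1p (lam1 vm θm)
    hvp (lam1_neg hvp hθp)
  refine ⟨K * (1 + (lam1 vp θp - lam1 vm θm)), Real.exp (-1), mul_pos hK (by linarith),
    Real.exp_pos _, fun σ hσ hσe t ht x => ?_⟩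
  have hwave := hprof σ hσ
  have hburgers := hwave.1
  calc _ ≤ K * |w σ t x - Set.projIcc _ _ hspeed (x / t)| :=
        hlip _ (hburgers.mem_Icc hspeed ht.le x) _ (Subtype.coe_prop _) _ _ _ _ _ _
          (hwave.isRarefactionState t x) (hfan.isRarefactionState hspeed (x / t))
    _ ≤ K * ((1 + (lam1 vp θp - lam1 vm θm)) * (layerWidth σ t / t)) := by
        gcongr
        exact hburgers.abs_sub_projIcc_le hspeed hσ hσe.le ht x
    _ = _ := by unfold layerWidth; ring
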